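/- arXiv:2303.10675 — 4 statements merged into one kernel-verified Lean document; each statement's English description precedes it below -/
import Mathlib

section
/- Consider the distributed value iteration algorithm under the setup and communication assumption below. Then there exists a vector r̄ ∈ ℝ^q such that for every agent ℓ and every agent index m, lim_{k→∞} r_{ℓ,m}^k = r̄_m; moreover, for every agent ℓ and every state i ∈ I_ℓ, the sequence (V_ℓ^k(i))_{k≥0} converges to a limit in ℝ. -/
open Finset Filter Topology


/-- The vector of values seen by agent `ℓ`. -/
noncomputable def comb {n q : ℕ} (I : Fin q → Finset (Fin n)) (ℓ : Fin q)
    (v : Fin n → ℝ) (r : Fin q → ℝ) (j : Fin n) : ℝ :=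
  (if j ∈ I ℓ then (1 : ℝ) else 0) * v j +
    ∑ m ∈ Finset.univ.erase ℓ, (if j ∈ I m then (1 : ℝ) else 0) * r m

lemma comb_eq {n q : ℕ} (I : Fin q → Finset (Fin n))
    (hIdisj : ∀ ℓ m, ℓ ≠ m → Disjoint (I ℓ) (I m)) (ℓ m : Fin q)
    (v : Fin n → ℝ) (r : Fin q → ℝ) (j : Fin n) (hj : j ∈ I m) :
    comb I ℓ v r j = if m = ℓ then v j else r m := by
  have key : ∀ m', m' ≠ m → j ∉ I m' := fun m' h hj' =>
    Finset.disjoint_left.1 (hIdisj m' m h) hj' hj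
  unfold comb
  split_ifs with h1 h2 h2
  · subst h2
    rw [Finset.sum_eq_zero]
    · ring
    · intro x hx
      rw [if_neg (key x (Finset.ne_of_mem_erase hx))]; ring
  · exact absurd h1 (key ℓ (Ne.symm h2))
  · subst h2; exact absurd hj h1
  · rw [Finset.sum_eq_single m]
    · rw [if_pos hj]; ring
    · intro x _ hx
      rw [if_neg (key x hx)]; ring
    · intro h
      exact absurd (Finset.mem_erase.2 ⟨h2, Finset.mem_univ _⟩) h

lemma comb_le {n q : ℕ} (I : Fin q → Finset (Fin n))
    (hIdisj : ∀ ℓ m, ℓ ≠ m → Disjoint (I ℓ) (I m))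
    (hIcover : ∀ i : Fin n, ∃ ℓ, i ∈ I ℓ) (ℓ : Fin q)
    (v v' : Fin n → ℝ) (r r' : Fin q → ℝ) (C : ℝ)
    (hv : ∀ i ∈ I ℓ, |v i - v' i| ≤ C) (hr : ∀ m, |r m - r' m| ≤ C) (j : Fin n) :
    |comb I ℓ v r j - comb I ℓ v' r' j| ≤ C := by
  obtain ⟨m, hm⟩ := hIcover j
  rw [comb_eq I hIdisj ℓ m v r j hm, comb_eq I hIdisj ℓ m v' r' j hm]
  split_ifs with h
  · subst h; exact hv j hm
  · exact hr m

lemma wsum_le {ι : Type*} (s : Finset ι) (w x y : ι → ℝ) (C : ℝ)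
    (hw : ∀ i ∈ s, 0 ≤ w i) (h1 : ∑ i ∈ s, w i = 1)
    (h : ∀ i ∈ s, |x i - y i| ≤ C) :
    |∑ i ∈ s, w i * x i - ∑ i ∈ s, w i * y i| ≤ C := by
  rw [← Finset.sum_sub_distrib]
  calc |∑ i ∈ s, (w i * x i - w i * y i)| ≤ ∑ i ∈ s, |w i * x i - w i * y i| :=
        Finset.abs_sum_le_sum_abs _ _
    _ ≤ ∑ i ∈ s, w i * C := by
        apply Finset.sum_le_sum
        intro i hi
        rw [← mul_sub, abs_mul, abs_of_nonneg (hw i hi)]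
        exact mul_le_mul_of_nonneg_left (h i hi) (hw i hi)
    _ = C := by rw [← Finset.sum_mul, h1, one_mul]

lemma inf_le_aux {A : Type*} (s : Finset A) (hs : s.Nonempty) (f g : A → ℝ) (C : ℝ)
    (h : ∀ u ∈ s, |f u - g u| ≤ C) : |s.inf' hs f - s.inf' hs g| ≤ C := by
  rw [abs_le]
  obtain ⟨a, ha, hfa⟩ := s.exists_mem_eq_inf' hs f
  obtain ⟨b, hb, hgb⟩ := s.exists_mem_eq_inf' hs g
  have h1 := abs_le.1 (h a ha)
  have h2 := abs_le.1 (h b hb)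
  have h3 := Finset.inf'_le f hb
  have h4 := Finset.inf'_le g ha
  constructor <;> linarith [h1.1, h1.2, h2.1, h2.2]

/-- The Bellman backup. -/
noncomputable def bell {n : ℕ} {A : Type*} (α : ℝ) (U : Finset A) (hU : U.Nonempty)
    (p g : A → Fin n → ℝ) (x : Fin n → ℝ) : ℝ :=
  U.inf' hU (fun u => ∑ j, p u j * (g u j + α * x j))

lemma bell_le {n : ℕ} {A : Type*} (α : ℝ) (hα0 : 0 ≤ α) (U : Finset A) (hU : U.Nonempty)
    (p g : A → Fin n → ℝ) (hp0 : ∀ u ∈ U, ∀ j, 0 ≤ p u j)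
    (hp1 : ∀ u ∈ U, ∑ j, p u j = 1) (x y : Fin n → ℝ) (C : ℝ)
    (h : ∀ j, |x j - y j| ≤ C) :
    |bell α U hU p g x - bell α U hU p g y| ≤ α * C := by
  apply inf_le_aux
  intro u hu
  apply wsum_le _ _ _ _ _ (fun j _ => hp0 u hu j) (hp1 u hu)
  intro j _
  rw [add_sub_add_left_eq_sub, ← mul_sub, abs_mul, abs_of_nonneg hα0]
  exact mul_le_mul_of_nonneg_left (h j) hα0

theorem stmt0
    {n q : ℕ} (hn : 0 < n) (hq : 0 < q)
    {A : Type*}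
    (α : ℝ) (hα0 : 0 ≤ α) (hα1 : α < 1)
    (I : Fin q → Finset (Fin n))
    (hIne : ∀ ℓ, (I ℓ).Nonempty)
    (hIdisj : ∀ ℓ m, ℓ ≠ m → Disjoint (I ℓ) (I m))
    (hIcover : ∀ i : Fin n, ∃ ℓ, i ∈ I ℓ)
    (U : Fin n → Finset A) (hU : ∀ i, (U i).Nonempty)
    (p : Fin n → A → Fin n → ℝ) (g : Fin n → A → Fin n → ℝ)
    (hp0 : ∀ i, ∀ u ∈ U i, ∀ j, 0 ≤ p i u j)
    (hp1 : ∀ i, ∀ u ∈ U i, ∑ j, p i u j = 1)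
    (d : Fin q → Fin n → ℝ)
    (hd0 : ∀ ℓ i, 0 ≤ d ℓ i)
    (hdz : ∀ ℓ i, i ∉ I ℓ → d ℓ i = 0)
    (hd1 : ∀ ℓ, ∑ i ∈ I ℓ, d ℓ i = 1)
    (E : ℕ → Finset (Fin q × Fin q))
    (V : ℕ → Fin q → Fin n → ℝ) (r : ℕ → Fin q → Fin q → ℝ)
    (hV0 : ∀ ℓ, ∀ i ∈ I ℓ, V 0 ℓ i = 0)
    (hr0 : ∀ ℓ m, r 0 ℓ m = 0)
    (hVrec : ∀ k ℓ, ∀ i ∈ I ℓ,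
      V (k + 1) ℓ i =
        (U i).inf' (hU i) (fun u => ∑ j, p i u j *
          (g i u j + α * ((if j ∈ I ℓ then (1 : ℝ) else 0) * V k ℓ j +
            ∑ m ∈ Finset.univ.erase ℓ, (if j ∈ I m then (1 : ℝ) else 0) * r k ℓ m))))
    (hrdiag : ∀ k ℓ, r (k + 1) ℓ ℓ = ∑ j ∈ I ℓ, d ℓ j * V (k + 1) ℓ j)
    (hroff : ∀ k ℓ m, m ≠ ℓ →
      r (k + 1) ℓ m = if (m, ℓ) ∈ E k then r (k + 1) m m else r k ℓ m)
    (B : ℕ)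
    (hE : ∀ k (m ℓ : Fin q), ∃ t, k ≤ t ∧ t ≤ k + B ∧ (m, ℓ) ∈ E t)
    :
    ∃ rbar : Fin q → ℝ,
      (∀ ℓ m : Fin q, Tendsto (fun k => r k ℓ m) atTop (𝓝 (rbar m))) ∧
      (∀ ℓ, ∀ i ∈ I ℓ, ∃ L : ℝ, Tendsto (fun k => V k ℓ i) atTop (𝓝 L)) := by
  classical
  choose own hown using hIcover
  have hIcover : ∀ i : Fin n, ∃ ℓ, i ∈ I ℓ := fun i => ⟨own i, hown i⟩
  have hownu : ∀ ℓ, ∀ i ∈ I ℓ, own i = ℓ := by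
    intro ℓ i hi
    by_contra h
    exact Finset.disjoint_left.1 (hIdisj _ _ h) (hown i) hi
  let avg : (Fin n → ℝ) → Fin q → ℝ := fun W m => ∑ j ∈ I m, d m j * W j
  let F : (Fin n → ℝ) → (Fin n → ℝ) := fun W i =>
    bell α (U i) (hU i) (p i) (g i) (comb I (own i) W (avg W))
  have havg : ∀ (x y : Fin n → ℝ) (C : ℝ) (m : Fin q), (∀ i ∈ I m, |x i - y i| ≤ C) →
      |avg x m - avg y m| ≤ C := fun x y C m h =>
    wsum_le _ _ _ _ _ (fun j _ => hd0 m j) (hd1 m) h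
  have hF : ContractingWith ⟨α, hα0⟩ F := by
    refine ⟨by exact_mod_cast hα1, LipschitzWith.of_dist_le_mul ?_⟩
    intro x y
    have hxy : ∀ i, |x i - y i| ≤ dist x y := fun i => by
      rw [← Real.dist_eq]; exact dist_le_pi_dist x y i
    refine (dist_pi_le_iff (by positivity)).2 ?_
    intro i
    rw [Real.dist_eq]
    exact bell_le α hα0 _ _ _ _ (hp0 i) (hp1 i) _ _ _
      (comb_le I hIdisj hIcover _ _ _ _ _ _ (fun i _ => hxy i)
        (fun m => havg _ _ _ _ (fun i _ => hxy i)))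
  obtain ⟨W, hW⟩ : ∃ W, F W = W := ⟨_, hF.fixedPoint_isFixedPt⟩
  have stepV : ∀ k C, (∀ ℓ, ∀ i ∈ I ℓ, |V k ℓ i - W i| ≤ C) →
      (∀ ℓ m, |r k ℓ m - avg W m| ≤ C) →
      ∀ ℓ, ∀ i ∈ I ℓ, |V (k+1) ℓ i - W i| ≤ α * C := by
    intro k C h1 h2 ℓ i hi
    have e1 : V (k+1) ℓ i = bell α (U i) (hU i) (p i) (g i) (comb I ℓ (V k ℓ) (r k ℓ)) :=
      hVrec k ℓ i hi
    have e2 : W i = bell α (U i) (hU i) (p i) (g i) (comb I ℓ W (avg W)) := by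
      have := congrFun hW i
      rw [← hownu ℓ i hi]
      exact this.symm
    rw [e1, e2]
    exact bell_le α hα0 _ _ _ _ (hp0 i) (hp1 i) _ _ _
      (comb_le I hIdisj hIcover _ _ _ _ _ _ (h1 ℓ) (h2 ℓ))
  have stepD : ∀ k C, (∀ ℓ, ∀ i ∈ I ℓ, |V k ℓ i - W i| ≤ C) →
      (∀ ℓ m, |r k ℓ m - avg W m| ≤ C) →
      ∀ ℓ, |r (k+1) ℓ ℓ - avg W ℓ| ≤ α * C := by
    intro k C h1 h2 ℓ
    rw [hrdiag]
    exact havg (V (k+1) ℓ) W _ ℓ (stepV k C h1 h2 ℓ)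
  obtain ⟨C, hC0, hCW, hCr⟩ : ∃ C : ℝ, 0 ≤ C ∧ (∀ i, |W i| ≤ C) ∧ ∀ m, |avg W m| ≤ C := by
    refine ⟨‖W‖, norm_nonneg _, fun i => norm_le_pi_norm W i, fun m => ?_⟩
    have := havg W 0 ‖W‖ m (fun i _ => by simpa using norm_le_pi_norm W i)
    simpa [avg] using this
  have main : ∀ N : ℕ, ∀ k, N * (B+1) ≤ k →
      (∀ ℓ, ∀ i ∈ I ℓ, |V k ℓ i - W i| ≤ α ^ N * C) ∧
      (∀ ℓ m, |r k ℓ m - avg W m| ≤ α ^ N * C) := by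
    intro N
    induction N with
    | zero =>
      intro k _
      induction k with
      | zero =>
        refine ⟨fun ℓ i hi => ?_, fun ℓ m => ?_⟩
        · rw [hV0 ℓ i hi]; simpa using hCW i
        · rw [hr0]; simpa using hCr m
      | succ k ih =>
        obtain ⟨h1, h2⟩ := ih (by simp)
        have hle : α * (α ^ 0 * C) ≤ α ^ 0 * C := by
          simp only [pow_zero, one_mul]; nlinarith
        have hD := stepD k _ h1 h2
        refine ⟨fun ℓ i hi => (stepV k _ h1 h2 ℓ i hi).trans hle, fun ℓ m => ?_⟩
        by_cases hm : m = ℓ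
        · subst hm; exact (hD m).trans hle
        · rw [hroff k ℓ m hm]
          split_ifs
          · exact (hD m).trans hle
          · exact h2 ℓ m
    | succ N ih =>
      have hs : α ^ (N+1) * C = α * (α ^ N * C) := by ring
      rw [hs]
      have hD : ∀ k, N * (B+1) ≤ k → ∀ ℓ, |r (k+1) ℓ ℓ - avg W ℓ| ≤ α * (α ^ N * C) :=
        fun k hk => stepD k _ (ih k hk).1 (ih k hk).2
      intro k hk
      have hk' : N * (B+1) + B + 1 ≤ k := by linarith
      obtain ⟨k, rfl⟩ : ∃ k', k = k' + 1 := ⟨k - 1, by omega⟩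
      refine ⟨stepV k _ (ih k (by omega)).1 (ih k (by omega)).2, fun ℓ m => ?_⟩
      by_cases hm : m = ℓ
      · subst hm; exact hD k (by omega) m
      · obtain ⟨t, ht1, ht2, htE⟩ := hE (N * (B+1)) m ℓ
        have : ∀ s, t ≤ s → |r (s+1) ℓ m - avg W m| ≤ α * (α ^ N * C) := by
          intro s hs
          induction s, hs using Nat.le_induction with
          | base => rw [hroff t ℓ m hm, if_pos htE]; exact hD t ht1 m
          | succ s hs ihs =>
            rw [hroff (s+1) ℓ m hm]
            split_ifs
            · exact hD (s+1) (by omega) m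
            · exact ihs
        exact this k (by omega)
  have hlim : Tendsto (fun N : ℕ => α ^ N * C) atTop (𝓝 0) := by
    simpa using (tendsto_pow_atTop_nhds_zero_of_lt_one hα0 hα1).mul_const C
  have conv : ∀ (x : ℕ → ℝ) (L : ℝ), (∀ N k : ℕ, N * (B+1) ≤ k → |x k - L| ≤ α ^ N * C) →
      Tendsto x atTop (𝓝 L) := by
    intro x L h
    rw [Metric.tendsto_atTop]
    intro ε hε
    obtain ⟨N, hN⟩ := (hlim.eventually (gt_mem_nhds hε)).exists
    exact ⟨N * (B+1), fun k hk => by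
      rw [Real.dist_eq]; exact (h N k hk).trans_lt hN⟩
  exact ⟨avg W, fun ℓ m => conv _ _ (fun N k hk => (main N k hk).2 ℓ m),
    fun ℓ i hi => ⟨W i, conv _ _ (fun N k hk => (main N k hk).1 ℓ i hi)⟩⟩
end

section
/- Consider the distributed value iteration algorithm under the setup below, with full communication at every iteration (B = 0, i.e., every ordered pair of agents (m,ℓ) belongs to E(k) for every k). Let J* : X → ℝ be the unique solution of the Bellman equation J*(i) = min_{u∈U(i)} Σ_{j∈X} p(i,u,j)·(g(i,u,j) + α·J*(j)) for all i ∈ X, and let δ = max_{ℓ} max_{i,j∈I_ℓ} |J*(i) − J*(j)|. Then for every agent ℓ and every state i ∈ I_ℓ, the limit V_ℓ*(i) = lim_{k→∞} V_ℓ^k(i) exists and satisfies |V_ℓ*(i) − J*(i)| ≤ α·δ/(1−α). -/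
open Finset Filter Topology

theorem aux_inf {A : Type*} (s : Finset A) (hs : s.Nonempty) (f h : A → ℝ) (C : ℝ)
    (H : ∀ u ∈ s, |f u - h u| ≤ C) : |s.inf' hs f - s.inf' hs h| ≤ C := by
  rw [abs_le]
  constructor
  · obtain ⟨u, hu, e⟩ := Finset.exists_mem_eq_inf' hs f
    have h1 := Finset.inf'_le h hu
    have h2 := abs_le.1 (H u hu)
    rw [e]; linarith
  · obtain ⟨u, hu, e⟩ := Finset.exists_mem_eq_inf' hs h
    have h1 := Finset.inf'_le f hu
    have h2 := abs_le.1 (H u hu)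
    rw [e]; linarith

theorem aux_avg {ι : Type*} (s : Finset ι) (w x : ι → ℝ) (C : ℝ) (hw : ∀ i ∈ s, 0 ≤ w i)
    (h1 : ∑ i ∈ s, w i = 1) (H : ∀ i ∈ s, |x i| ≤ C) : |∑ i ∈ s, w i * x i| ≤ C := by
  calc |∑ i ∈ s, w i * x i| ≤ ∑ i ∈ s, |w i * x i| := Finset.abs_sum_le_sum_abs _ _
    _ ≤ ∑ i ∈ s, w i * C := Finset.sum_le_sum fun i hi => by
        rw [abs_mul, abs_of_nonneg (hw i hi)]
        exact mul_le_mul_of_nonneg_left (H i hi) (hw i hi)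
    _ = C := by rw [← Finset.sum_mul, h1, one_mul]

theorem aux_bell {n : ℕ} {A : Type*} (α : ℝ) (hα0 : 0 ≤ α) (s : Finset A) (hs : s.Nonempty)
    (p g : A → Fin n → ℝ) (hp0 : ∀ u ∈ s, ∀ j, 0 ≤ p u j) (hp1 : ∀ u ∈ s, ∑ j, p u j = 1)
    (x y : Fin n → ℝ) (C : ℝ) (H : ∀ j, |x j - y j| ≤ C) :
    |s.inf' hs (fun u => ∑ j, p u j * (g u j + α * x j)) -
      s.inf' hs (fun u => ∑ j, p u j * (g u j + α * y j))| ≤ α * C := by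
  apply aux_inf
  intro u hu
  rw [← Finset.sum_sub_distrib]
  have := aux_avg Finset.univ (p u) (fun j => α * (x j - y j)) (α * C)
    (fun j _ => hp0 u hu j) (hp1 u hu) (fun j _ => by
      rw [abs_mul, abs_of_nonneg hα0]; exact mul_le_mul_of_nonneg_left (H j) hα0)
  convert this using 2
  apply Finset.sum_congr rfl
  intro j _
  ring

theorem stmt1
    {n q : ℕ} (hn : 0 < n) (hq : 0 < q)
    {A : Type*}
    (α : ℝ) (hα0 : 0 ≤ α) (hα1 : α < 1)
    (I : Fin q → Finset (Fin n))
    (hIne : ∀ ℓ, (I ℓ).Nonempty)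
    (hIdisj : ∀ ℓ m, ℓ ≠ m → Disjoint (I ℓ) (I m))
    (hIcover : ∀ i : Fin n, ∃ ℓ, i ∈ I ℓ)
    (U : Fin n → Finset A) (hU : ∀ i, (U i).Nonempty)
    (p : Fin n → A → Fin n → ℝ) (g : Fin n → A → Fin n → ℝ)
    (hp0 : ∀ i, ∀ u ∈ U i, ∀ j, 0 ≤ p i u j)
    (hp1 : ∀ i, ∀ u ∈ U i, ∑ j, p i u j = 1)
    (d : Fin q → Fin n → ℝ)
    (hd0 : ∀ ℓ i, 0 ≤ d ℓ i)
    (hdz : ∀ ℓ i, i ∉ I ℓ → d ℓ i = 0)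
    (hd1 : ∀ ℓ, ∑ i ∈ I ℓ, d ℓ i = 1)
    (E : ℕ → Finset (Fin q × Fin q))
    (V : ℕ → Fin q → Fin n → ℝ) (r : ℕ → Fin q → Fin q → ℝ)
    (hV0 : ∀ ℓ, ∀ i ∈ I ℓ, V 0 ℓ i = 0)
    (hr0 : ∀ ℓ m, r 0 ℓ m = 0)
    (hVrec : ∀ k ℓ, ∀ i ∈ I ℓ,
      V (k + 1) ℓ i =
        (U i).inf' (hU i) (fun u => ∑ j, p i u j *
          (g i u j + α * ((if j ∈ I ℓ then (1 : ℝ) else 0) * V k ℓ j +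
            ∑ m ∈ Finset.univ.erase ℓ, (if j ∈ I m then (1 : ℝ) else 0) * r k ℓ m))))
    (hrdiag : ∀ k ℓ, r (k + 1) ℓ ℓ = ∑ j ∈ I ℓ, d ℓ j * V (k + 1) ℓ j)
    (hroff : ∀ k ℓ m, m ≠ ℓ →
      r (k + 1) ℓ m = if (m, ℓ) ∈ E k then r (k + 1) m m else r k ℓ m)
    (hEfull : ∀ k (m ℓ : Fin q), (m, ℓ) ∈ E k)
    (Jstar : Fin n → ℝ)
    (hJ : ∀ i, Jstar i =
      (U i).inf' (hU i) (fun u => ∑ j, p i u j * (g i u j + α * Jstar j)))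
    (δ : ℝ)
    (hδ : IsGreatest {x : ℝ | ∃ ℓ, ∃ i ∈ I ℓ, ∃ j ∈ I ℓ, x = |Jstar i - Jstar j|} δ) :
    ∀ ℓ, ∀ i ∈ I ℓ, ∃ Vstar : ℝ,
      Tendsto (fun k => V k ℓ i) atTop (𝓝 Vstar) ∧
      |Vstar - Jstar i| ≤ α * δ / (1 - α) := by
  choose c hc using hIcover
  have hcu : ∀ i m, i ∈ I m ↔ m = c i := by
    intro i m
    constructor
    · intro hi
      by_contra hne
      exact Finset.disjoint_left.1 (hIdisj m (c i) hne) hi (hc i)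
    · rintro rfl; exact hc i
  -- the value of state j as seen from state i
  let T : (Fin n → ℝ) → Fin n → Fin n → ℝ := fun J i j =>
    if c j = c i then J j else ∑ j' ∈ I (c j), d (c j) j' * J j'
  let F : (Fin n → ℝ) → Fin n → ℝ := fun J i =>
    (U i).inf' (hU i) (fun u => ∑ j, p i u j * (g i u j + α * T J i j))
  let W : ℕ → Fin n → ℝ := fun k i => V k (c i) i
  have hr : ∀ k ℓ m, r k ℓ m = ∑ j ∈ I m, d m j * V k m j := by
    intro k ℓ m
    cases k with
    | zero =>
      rw [hr0]
      symm
      apply Finset.sum_eq_zero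
      intro j hj
      rw [hV0 m j hj, mul_zero]
    | succ k =>
      by_cases h : m = ℓ
      · subst h; exact hrdiag k m
      · rw [hroff k ℓ m h, if_pos (hEfull k m ℓ), hrdiag]
  have hW : ∀ k, W (k + 1) = F (W k) := by
    intro k
    funext i
    show V (k + 1) (c i) i = _
    rw [hVrec k (c i) i (hc i)]
    show _ = (U i).inf' (hU i) (fun u => ∑ j, p i u j * (g i u j + α * T (W k) i j))
    congr 1
    funext u
    apply Finset.sum_congr rfl
    intro j _
    congr 3
    simp only [hcu, T, W]
    by_cases h : c j = c i
    · rw [if_pos h.symm, if_pos h, h, one_mul, Finset.sum_eq_zero, add_zero]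
      intro m hm
      rw [if_neg (Finset.ne_of_mem_erase hm), zero_mul]
    · rw [if_neg (fun e => h e.symm), if_neg h, zero_mul, zero_add,
        Finset.sum_eq_single (c j), if_pos rfl, one_mul, hr]
      · apply Finset.sum_congr rfl
        intro j' hj'
        rw [← (hcu j' (c j)).1 hj']
      · intro m _ hm
        rw [if_neg hm, zero_mul]
      · intro h'
        exact absurd (Finset.mem_erase.2 ⟨h, Finset.mem_univ _⟩) h'
  have hFc : ContractingWith ⟨α, hα0⟩ F := by
    refine ⟨by exact_mod_cast hα1, LipschitzWith.of_dist_le_mul fun x y => ?_⟩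
    show dist (F x) (F y) ≤ α * dist x y
    rw [dist_pi_le_iff (mul_nonneg hα0 dist_nonneg)]
    intro i
    rw [Real.dist_eq]
    apply aux_bell α hα0 (U i) (hU i) (p i) (g i) (hp0 i) (hp1 i)
    have hxy : ∀ j, |x j - y j| ≤ dist x y := fun j => by
      rw [← Real.dist_eq]; exact dist_le_pi_dist x y j
    intro j
    simp only [T]
    split_ifs
    · exact hxy j
    · rw [← Finset.sum_sub_distrib]
      simp only [← mul_sub]
      exact aux_avg _ _ _ _ (fun i _ => hd0 _ i) (hd1 _) (fun i _ => hxy i)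
  have hδ' : ∀ ℓ, ∀ i ∈ I ℓ, ∀ j ∈ I ℓ, |Jstar i - Jstar j| ≤ δ :=
    fun ℓ i hi j hj => hδ.2 ⟨ℓ, i, hi, j, hj, rfl⟩
  have hδ0 : 0 ≤ δ := by
    obtain ⟨ℓ, i, _, j, _, e⟩ := hδ.1
    rw [e]; exact abs_nonneg _
  have hJF : dist Jstar (F Jstar) ≤ α * δ := by
    rw [dist_pi_le_iff (mul_nonneg hα0 hδ0)]
    intro i
    rw [Real.dist_eq, hJ i]
    apply aux_bell α hα0 (U i) (hU i) (p i) (g i) (hp0 i) (hp1 i)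
    intro j
    simp only [T]
    split_ifs
    · simpa using hδ0
    · have := aux_avg (I (c j)) (d (c j)) (fun j' => Jstar j - Jstar j') δ
        (fun i _ => hd0 _ i) (hd1 _) (fun i hi => hδ' (c j) j (hc j) i hi)
      simpa only [mul_sub, Finset.sum_sub_distrib, ← Finset.sum_mul, hd1, one_mul] using this
  have hWi : ∀ k, W k = F^[k] (W 0) := by
    intro k
    induction k with
    | zero => rfl
    | succ k ih => rw [hW, Function.iterate_succ_apply', ← ih]
  intro ℓ i hi
  have hℓ := (hcu i ℓ).1 hi
  subst hℓ
  refine ⟨ContractingWith.fixedPoint F hFc i, ?_, ?_⟩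
  · have h := hFc.tendsto_iterate_fixedPoint (W 0)
    simp only [← hWi] at h
    exact (tendsto_pi_nhds.1 h) i
  · have h1 : dist Jstar (ContractingWith.fixedPoint F hFc) ≤ dist Jstar (F Jstar) / (1 - α) :=
      hFc.dist_fixedPoint_le Jstar
    have h2 := dist_le_pi_dist Jstar (ContractingWith.fixedPoint F hFc) i
    rw [Real.dist_eq, abs_sub_comm] at h2
    refine h2.trans (h1.trans ?_)
    have : 0 ≤ 1 - α := by linarith
    gcongr
end

section
/- Suppose J* : X → ℝ satisfies the Bellman equation J*(i) = min_{u∈U(i)} Σ_{j∈X} p(i,u,j)·(g(i,u,j) + α·J*(j)) for all i ∈ X, and let δ = max_{ℓ} max_{i,j∈I_ℓ} |J*(i) − J*(j)|. Define V̄(j) = J*(j) + α·δ/(1−α) for j ∈ X and r̄_m = Σ_{j∈I_m} d_{mj}·V̄(j) for each agent m. Then for every agent ℓ and every state i ∈ I_ℓ: min_{u∈U(i)} Σ_{j∈X} p(i,u,j)·(g(i,u,j) + α·(φ_{jℓ}·V̄(j) + Σ_{m≠ℓ} φ_{jm}·r̄_m)) ≤ V̄(i). -/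
open Finset Filter Topology

theorem stmt7
    {n q : ℕ} (hn : 0 < n) (hq : 0 < q)
    {A : Type*}
    (α : ℝ) (hα0 : 0 ≤ α) (hα1 : α < 1)
    (I : Fin q → Finset (Fin n))
    (hIne : ∀ ℓ, (I ℓ).Nonempty)
    (hIdisj : ∀ ℓ m, ℓ ≠ m → Disjoint (I ℓ) (I m))
    (hIcover : ∀ i : Fin n, ∃ ℓ, i ∈ I ℓ)
    (U : Fin n → Finset A) (hU : ∀ i, (U i).Nonempty)
    (p : Fin n → A → Fin n → ℝ) (g : Fin n → A → Fin n → ℝ)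
    (hp0 : ∀ i, ∀ u ∈ U i, ∀ j, 0 ≤ p i u j)
    (hp1 : ∀ i, ∀ u ∈ U i, ∑ j, p i u j = 1)
    (d : Fin q → Fin n → ℝ)
    (hd0 : ∀ ℓ i, 0 ≤ d ℓ i)
    (hdz : ∀ ℓ i, i ∉ I ℓ → d ℓ i = 0)
    (hd1 : ∀ ℓ, ∑ i ∈ I ℓ, d ℓ i = 1)
    (Jstar : Fin n → ℝ)
    (hJ : ∀ i, Jstar i =
      (U i).inf' (hU i) (fun u => ∑ j, p i u j * (g i u j + α * Jstar j)))
    (δ : ℝ)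
    (hδ : IsGreatest {x : ℝ | ∃ ℓ, ∃ i ∈ I ℓ, ∃ j ∈ I ℓ, x = |Jstar i - Jstar j|} δ)
    (Vbar : Fin n → ℝ) (hVbar : ∀ j, Vbar j = Jstar j + α * δ / (1 - α))
    (rbar : Fin q → ℝ) (hrbar : ∀ m, rbar m = ∑ j ∈ I m, d m j * Vbar j) :
    ∀ ℓ, ∀ i ∈ I ℓ,
      (U i).inf' (hU i) (fun u => ∑ j, p i u j *
          (g i u j + α * ((if j ∈ I ℓ then (1 : ℝ) else 0) * Vbar j +
            ∑ m ∈ Finset.univ.erase ℓ, (if j ∈ I m then (1 : ℝ) else 0) * rbar m))) ≤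
        Vbar i := by
  intro ℓ i hi
  obtain ⟨u, hu, hmin⟩ := Finset.exists_mem_eq_inf' (hU i)
    (fun u => ∑ j, p i u j * (g i u j + α * Jstar j))
  have hJi := (hJ i).trans hmin
  have hub : ∀ m, ∀ a ∈ I m, ∀ b ∈ I m, |Jstar a - Jstar b| ≤ δ := fun m a ha b hb =>
    hδ.2 ⟨m, a, ha, b, hb, rfl⟩
  have hδ0 : 0 ≤ δ := (abs_nonneg _).trans (hub ℓ i hi i hi)
  set c := α * δ / (1 - α) with hc
  have hcc : α * (c + δ) = c := by
    have : 1 - α ≠ 0 := by linarith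
    rw [hc]; field_simp; ring
  have hr : ∀ m, ∀ j ∈ I m, rbar m ≤ Jstar j + c + δ := by
    intro m j hj
    rw [hrbar]
    calc ∑ k ∈ I m, d m k * Vbar k ≤ ∑ k ∈ I m, d m k * (Jstar j + c + δ) := by
          refine Finset.sum_le_sum fun k hk => mul_le_mul_of_nonneg_left ?_ (hd0 m k)
          rw [hVbar]
          have := (abs_le.mp (hub m k hk j hj)).2
          linarith
      _ = Jstar j + c + δ := by rw [← Finset.sum_mul, hd1, one_mul]
  have hb : ∀ j, (if j ∈ I ℓ then (1 : ℝ) else 0) * Vbar j +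
      ∑ m ∈ Finset.univ.erase ℓ, (if j ∈ I m then (1 : ℝ) else 0) * rbar m
      ≤ Jstar j + c + δ := by
    intro j
    obtain ⟨m, hm⟩ := hIcover j
    have hne : ∀ k, k ≠ m → j ∉ I k := fun k hk hjk =>
      (Finset.disjoint_left.mp (hIdisj k m hk)) hjk hm
    by_cases hml : m = ℓ
    · subst hml
      rw [Finset.sum_eq_zero, if_pos hm, hVbar]
      · linarith
      · intro k hk
        rw [if_neg (hne k (Finset.ne_of_mem_erase hk)), zero_mul]
    · rw [if_neg (hne ℓ (Ne.symm hml)), Finset.sum_eq_single m, if_pos hm]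
      · have := hr m j hm
        linarith
      · intro k _ hk
        rw [if_neg (hne k hk), zero_mul]
      · intro h
        exact absurd (Finset.mem_erase.mpr ⟨hml, Finset.mem_univ _⟩) h
  refine (Finset.inf'_le _ hu).trans ?_
  calc _ ≤ ∑ j, (p i u j * (g i u j + α * Jstar j) + p i u j * c) := by
        refine Finset.sum_le_sum fun j _ => ?_
        rw [← mul_add]
        refine mul_le_mul_of_nonneg_left ?_ (hp0 i u hu j)
        have := mul_le_mul_of_nonneg_left (hb j) hα0
        linarith
    _ = Vbar i := by
        rw [Finset.sum_add_distrib, ← Finset.sum_mul, hp1 i u hu, one_mul, hVbar, hJi]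
end

section
/- Suppose J* : X → ℝ satisfies the Bellman equation J*(i) = min_{u∈U(i)} Σ_{j∈X} p(i,u,j)·(g(i,u,j) + α·J*(j)) for all i ∈ X, and let δ = max_{ℓ} max_{i,j∈I_ℓ} |J*(i) − J*(j)|. Define V̲(j) = J*(j) − α·δ/(1−α) for j ∈ X and r̲_m = Σ_{j∈I_m} d_{mj}·V̲(j) for each agent m. Then for every agent ℓ and every state i ∈ I_ℓ: min_{u∈U(i)} Σ_{j∈X} p(i,u,j)·(g(i,u,j) + α·(φ_{jℓ}·V̲(j) + Σ_{m≠ℓ} φ_{jm}·r̲_m)) ≥ V̲(i). -/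
open Finset Filter Topology

theorem stmt8
    {n q : ℕ} (hn : 0 < n) (hq : 0 < q)
    {A : Type*}
    (α : ℝ) (hα0 : 0 ≤ α) (hα1 : α < 1)
    (I : Fin q → Finset (Fin n))
    (hIne : ∀ ℓ, (I ℓ).Nonempty)
    (hIdisj : ∀ ℓ m, ℓ ≠ m → Disjoint (I ℓ) (I m))
    (hIcover : ∀ i : Fin n, ∃ ℓ, i ∈ I ℓ)
    (U : Fin n → Finset A) (hU : ∀ i, (U i).Nonempty)
    (p : Fin n → A → Fin n → ℝ) (g : Fin n → A → Fin n → ℝ)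
    (hp0 : ∀ i, ∀ u ∈ U i, ∀ j, 0 ≤ p i u j)
    (hp1 : ∀ i, ∀ u ∈ U i, ∑ j, p i u j = 1)
    (d : Fin q → Fin n → ℝ)
    (hd0 : ∀ ℓ i, 0 ≤ d ℓ i)
    (hdz : ∀ ℓ i, i ∉ I ℓ → d ℓ i = 0)
    (hd1 : ∀ ℓ, ∑ i ∈ I ℓ, d ℓ i = 1)
    (Jstar : Fin n → ℝ)
    (hJ : ∀ i, Jstar i =
      (U i).inf' (hU i) (fun u => ∑ j, p i u j * (g i u j + α * Jstar j)))
    (δ : ℝ)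
    (hδ : IsGreatest {x : ℝ | ∃ ℓ, ∃ i ∈ I ℓ, ∃ j ∈ I ℓ, x = |Jstar i - Jstar j|} δ)
    (Vlow : Fin n → ℝ) (hVlow : ∀ j, Vlow j = Jstar j - α * δ / (1 - α))
    (rlow : Fin q → ℝ) (hrlow : ∀ m, rlow m = ∑ j ∈ I m, d m j * Vlow j) :
    ∀ ℓ, ∀ i ∈ I ℓ,
      Vlow i ≤
      (U i).inf' (hU i) (fun u => ∑ j, p i u j *
          (g i u j + α * ((if j ∈ I ℓ then (1 : ℝ) else 0) * Vlow j +
            ∑ m ∈ Finset.univ.erase ℓ, (if j ∈ I m then (1 : ℝ) else 0) * rlow m))) := by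
  intro ℓ i hi
  have h1α : (1 - α) ≠ 0 := by linarith
  obtain ⟨c, hc⟩ : ∃ c, c = α * δ / (1 - α) := ⟨_, rfl⟩
  have hcc : α * (δ + c) = c := by
    rw [hc]; field_simp; ring
  have hδ0 : 0 ≤ δ := by
    obtain ⟨_, a, _, b, _, h⟩ := hδ.1
    rw [h]; exact abs_nonneg _
  have hV : ∀ j, Vlow j = Jstar j - c := fun j => by rw [hVlow, hc]
  have hr : ∀ m, ∀ j ∈ I m, Jstar j - δ - c ≤ rlow m := by
    intro m j hj
    rw [hrlow]
    calc Jstar j - δ - c = ∑ k ∈ I m, d m k * (Jstar j - δ - c) := by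
          rw [← Finset.sum_mul, hd1, one_mul]
      _ ≤ _ := by
          refine Finset.sum_le_sum fun k hk => mul_le_mul_of_nonneg_left ?_ (hd0 m k)
          have h1 : |Jstar j - Jstar k| ≤ δ := hδ.2 ⟨m, j, hj, k, hk, rfl⟩
          have h2 := le_abs_self (Jstar j - Jstar k)
          rw [hV]; linarith
  have hW : ∀ j, Jstar j - δ - c ≤ (if j ∈ I ℓ then (1 : ℝ) else 0) * Vlow j +
            ∑ m ∈ Finset.univ.erase ℓ, (if j ∈ I m then (1 : ℝ) else 0) * rlow m := by
    intro j
    have huniq : ∀ m m', j ∈ I m → j ∈ I m' → m = m' := by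
      intro m m' h h'
      by_contra hne
      exact Finset.disjoint_left.mp (hIdisj m m' hne) h h'
    by_cases hj : j ∈ I ℓ
    · rw [Finset.sum_eq_zero, if_pos hj, hV]
      · linarith
      · intro m hm
        rw [if_neg, zero_mul]
        intro h
        exact (Finset.ne_of_mem_erase hm) (huniq _ _ h hj)
    · obtain ⟨m, hm⟩ := hIcover j
      have hne : m ≠ ℓ := by rintro rfl; exact hj hm
      rw [if_neg hj, Finset.sum_eq_single m, if_pos hm]
      · have := hr m j hm
        linarith
      · intro b _ hb
        rw [if_neg, zero_mul]
        intro h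
        exact hb (huniq _ _ h hm)
      · intro h
        exact absurd (Finset.mem_erase.mpr ⟨hne, Finset.mem_univ _⟩) h
  refine Finset.le_inf' _ _ fun u hu => ?_
  have hJu : Jstar i ≤ ∑ j, p i u j * (g i u j + α * Jstar j) := by
    rw [hJ i]
    exact Finset.inf'_le (fun u => ∑ j, p i u j * (g i u j + α * Jstar j)) hu
  calc Vlow i ≤ ∑ j, p i u j * (g i u j + α * Jstar j) - (∑ j, p i u j) * c := by
        rw [hp1 i u hu, hV]; linarith
    _ = ∑ j, p i u j * (g i u j + α * Jstar j - c) := by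
        rw [Finset.sum_mul, ← Finset.sum_sub_distrib]
        exact Finset.sum_congr rfl fun j _ => by ring
    _ ≤ _ := by
        refine Finset.sum_le_sum fun j _ => mul_le_mul_of_nonneg_left ?_ (hp0 i u hu j)
        have := mul_le_mul_of_nonneg_left (hW j) hα0
        linarith
end
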